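/- Let d_1, …, d_k ≥ 0 and ρ ≥ 0 be given, let m₀ be the number of indices j with d_j ≤ ρ, and define F(σ) = Σ_{j=1}^k exp(−max(0, d_j − ρ)/σ) for σ > 0. If m₀ < log₂(k) < k, then there exists a unique σ* > 0 such that F(σ*) = log₂(k); that is, the UMAP normalization equation Σ_{j=1}^k ω(x_i, x_j) = log₂(k) has exactly one solution σ_i > 0. -/

import Mathlib

/-!
As a function of `t = 1 / σ`, the sum of the edge weights is `∑ j, exp (-a j * t)` with
`a j = max 0 (d j - ρ)`. It is continuous, equals `k` at `t = 0` and tends to the number `m₀` of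
vanishing exponents as `t → ∞`; since `m₀ < k`, some exponent is positive and the sum is strictly
decreasing. Hence it takes each value strictly between `m₀` and `k` exactly once on `t > 0`.
-/

open Filter Topology

section ExpSum

variable {ι : Type*} [Fintype ι] {a : ι → ℝ}

/-- The exponential sum with exponents `a`, i.e. the Laplace transform of the counting measure on
the family `a`. The total edge weight at scale `σ` is its value at `t = σ⁻¹`, a variable for which
`t = 0` (infinite scale) is an ordinary point. -/
noncomputable def expSum (a : ι → ℝ) (t : ℝ) : ℝ :=
  ∑ j, Real.exp (-a j * t)

theorem expSum_zero (a : ι → ℝ) : expSum a 0 = Fintype.card ι := by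
  simp [expSum]

theorem continuous_expSum (a : ι → ℝ) : Continuous (expSum a) := by
  unfold expSum
  fun_prop

theorem tendsto_exp_neg_mul_atTop {c : ℝ} (hc : 0 ≤ c) :
    Tendsto (fun t : ℝ => Real.exp (-c * t)) atTop (𝓝 (if c = 0 then 1 else 0)) := by
  split_ifs with h
  · simp [h]
  · have hneg : -c < 0 := neg_neg_of_pos (hc.lt_of_ne' h)
    exact Real.tendsto_exp_atBot.comp (tendsto_id.const_mul_atTop_of_neg hneg)

theorem tendsto_expSum_atTop (ha : 0 ≤ a) :
    Tendsto (expSum a) atTop (𝓝 (Finset.univ.filter fun j => a j = 0).card) := by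
  rw [Finset.natCast_card_filter]
  exact tendsto_finsetSum _ fun j _ => tendsto_exp_neg_mul_atTop (ha j)

theorem strictAnti_expSum (ha : 0 < a) : StrictAnti (expSum a) := by
  obtain ⟨hnonneg, i, hi⟩ := Pi.lt_def.1 ha
  intro s t hst
  refine Finset.sum_lt_sum (fun j _ => ?_) ⟨i, Finset.mem_univ i, ?_⟩
  · exact Real.exp_le_exp.2 (mul_le_mul_of_nonpos_left hst.le (neg_nonpos.2 (hnonneg j)))
  · exact Real.exp_lt_exp.2 (mul_lt_mul_of_neg_left hst (neg_neg_of_pos hi))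

theorem existsUnique_pos_expSum_eq {L : ℝ} (ha : 0 ≤ a)
    (hlower : ((Finset.univ.filter fun j => a j = 0).card : ℝ) < L)
    (hupper : L < Fintype.card ι) :
    ∃! t : ℝ, 0 < t ∧ expSum a t = L := by
  have ha_ne : a ≠ 0 := by
    rintro rfl
    exact lt_asymm hupper (by simpa using hlower)
  have hanti : StrictAnti (expSum a) := strictAnti_expSum (ha.lt_of_ne' ha_ne)
  obtain ⟨t, -, ht⟩ : L ∈ expSum a '' Set.Ici 0 :=
    isPreconnected_Ici.intermediate_value_Ioc Set.self_mem_Ici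
      (le_principal_iff.2 (Ici_mem_atTop 0)) (continuous_expSum a).continuousOn
      (tendsto_expSum_atTop ha) ⟨hlower, by simpa only [expSum_zero] using hupper.le⟩
  have ht_pos : 0 < t := by
    rwa [← hanti.lt_iff_gt, ht, expSum_zero]
  exact ⟨t, ⟨ht_pos, ht⟩, fun s hs => hanti.injective (hs.2.trans ht.symm)⟩

theorem umap_normalization_unique_solution_general (d : ι → ℝ) (ρ L : ℝ)
    (hlower : ((Finset.univ.filter fun j => d j ≤ ρ).card : ℝ) < L)
    (hupper : L < Fintype.card ι) :
    ∃! σ : ℝ, 0 < σ ∧ ∑ j, Real.exp (-(max 0 (d j - ρ)) / σ) = L := by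
  have h_inv_scale : ∃! t : ℝ, 0 < t ∧ expSum (fun j => max 0 (d j - ρ)) t = L :=
    existsUnique_pos_expSum_eq (fun j => le_max_left 0 (d j - ρ))
      (by simpa only [max_eq_left_iff, sub_nonpos] using hlower) hupper
  refine ((Equiv.inv ℝ).existsUnique_congr fun σ => ?_).2 h_inv_scale
  simp only [Equiv.inv_apply, inv_pos, expSum, div_eq_mul_inv]

end ExpSum

/-- For distances `d j ≥ 0` and `ρ ≥ 0`, with `m₀` the number of indices `j` with `d j ≤ ρ`
and `F(σ) = Σ_j exp(−max(0, d j − ρ)/σ)`: if `m₀ < log₂ k < k` then there is a unique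
`σ* > 0` with `F(σ*) = log₂ k`. -/
theorem umap_normalization_unique_solution (k : ℕ) (d : Fin k → ℝ) (hd : ∀ j, 0 ≤ d j)
    (ρ : ℝ) (hρ : 0 ≤ ρ)
    (h1 : ((Finset.univ.filter (fun j => d j ≤ ρ)).card : ℝ) < Real.logb 2 k)
    (h2 : Real.logb 2 k < (k : ℝ)) :
    ∃! σ : ℝ, 0 < σ ∧
      ∑ j, Real.exp (-(max 0 (d j - ρ)) / σ) = Real.logb 2 k :=
  umap_normalization_unique_solution_general d ρ _ h1 (by rwa [Fintype.card_fin])
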